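/- Let (F_0, a) be initial data for the completion problem in ℂ^d. Then the set of frame operators of completions, SC_a(F_0) = {S_F : F ∈ C_a(F_0)}, equals {S : S is a positive semidefinite d×d matrix, S − S_0 is positive semidefinite, and a ≺ λ(S − S_0)}. -/

import Mathlib

open Finset
open scoped ComplexOrder

noncomputable def sortAsc {m : ℕ} (x : Fin m → ℝ) : Fin m → ℝ :=
  x ∘ Tuple.sort x

noncomputable def sortDesc {m : ℕ} (x : Fin m → ℝ) : Fin m → ℝ :=
  fun i => (x ∘ Tuple.sort x) i.rev

noncomputable def pad {k : ℕ} (x : Fin k → ℝ) (m : ℕ) : Fin m → ℝ :=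
  fun i => if h : (i : ℕ) < k then x ⟨i, h⟩ else 0

/-- `MajorizedBy x y` means `x ≺ y`. -/
def MajorizedBy {m : ℕ} (x y : Fin m → ℝ) : Prop :=
  (∀ j : Fin m, ∑ i ∈ Finset.Iic j, sortDesc x i ≤ ∑ i ∈ Finset.Iic j, sortDesc y i) ∧
    ∑ i, x i = ∑ i, y i

/-- Majorization of vectors of possibly different lengths, padding with zeros. -/
def MajorizedByPad {k m : ℕ} (x : Fin k → ℝ) (y : Fin m → ℝ) : Prop :=
  MajorizedBy (pad x (max k m)) (pad y (max k m))

/-- The frame operator `S_F = ∑ f_i f_i^*` of a finite sequence of vectors in `ℂ^d`. -/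
noncomputable def frameOp {d n : ℕ} (F : Fin n → Fin d → ℂ) : Matrix (Fin d) (Fin d) ℂ :=
  ∑ l, Matrix.vecMulVec (F l) (star (F l))

/-- The squared norm `‖g‖²` of a vector in `ℂ^d`. -/
noncomputable def normSqVec {d : ℕ} (g : Fin d → ℂ) : ℝ :=
  ∑ i, Complex.normSq (g i)

open scoped Classical in
/-- Eigenvalues of a (Hermitian) matrix arranged in decreasing order. -/
noncomputable def eigsDesc {d : ℕ} (S : Matrix (Fin d) (Fin d) ℂ) : Fin d → ℝ :=
  if h : S.IsHermitian then sortDesc h.eigenvalues else 0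

open scoped Classical in
/-- Eigenvalues of a (Hermitian) matrix arranged in increasing order. -/
noncomputable def eigsAsc {d : ℕ} (S : Matrix (Fin d) (Fin d) ℂ) : Fin d → ℝ :=
  if h : S.IsHermitian then sortAsc h.eigenvalues else 0

/-- `Γ_d(a)`: non-increasing nonnegative vectors in `ℝ^d` majorizing `a`. -/
def Gamma {k : ℕ} (d : ℕ) (a : Fin k → ℝ) : Set (Fin d → ℝ) :=
  {μ | Antitone μ ∧ (∀ i, 0 ≤ μ i) ∧ MajorizedByPad a μ}

/-- The convex potential `P_f = tr f(S) = ∑ f(λ_i(S))`. -/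
noncomputable def potential {d : ℕ} (f : ℝ → ℝ) (S : Matrix (Fin d) (Fin d) ℂ) : ℝ :=
  ∑ i, f (eigsDesc S i)

/-- Final averages `Q_{j,r} = (1/(r-j)) (∑_{i=j+1}^k a_i + ∑_{i=j+1}^r λ_i)` (1-based). -/
noncomputable def finalAvg {d k : ℕ} (lam : Fin d → ℝ) (a : Fin k → ℝ) (j r : ℕ) : ℝ :=
  ((∑ i : Fin k, if j ≤ (i : ℕ) then a i else 0) +
      (∑ i : Fin d, if j ≤ (i : ℕ) ∧ (i : ℕ) < r then lam i else 0)) / ((r : ℝ) - (j : ℝ))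

/-- Initial averages: `initAvg lam a lo hi = P_{lo+1,hi}` (1-based), i.e. the average of
`h_i = λ_i + a_i` over the (0-based) index window `[lo, hi)`. -/
noncomputable def initAvg {d k : ℕ} (lam : Fin d → ℝ) (a : Fin k → ℝ) (lo hi : ℕ) : ℝ :=
  ((∑ i : Fin d, if lo ≤ (i : ℕ) ∧ (i : ℕ) < hi then lam i else 0) +
      (∑ i : Fin k, if lo ≤ (i : ℕ) ∧ (i : ℕ) < hi then a i else 0)) / ((hi : ℝ) - (lo : ℝ))

/-- 1-based access to a vector indexed by `Fin d`. -/
noncomputable def get1 {d : ℕ} (lam : Fin d → ℝ) (i : ℕ) : ℝ :=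
  if h : i - 1 < d then lam ⟨i - 1, h⟩ else 0

/-- The index `s` is feasible for the pair `(λ, a)`: the unique vector
`ν_s = (c·1_{r-s}, λ_{r+1},…,λ_d)` determined by the truncated data satisfies
`a^s ≺ ν_s - λ^s`. -/
def FeasibleIdx {d k : ℕ} (lam : Fin d → ℝ) (a : Fin k → ℝ) (s : ℕ) : Prop :=
  ∃ r : ℕ, ∃ c : ℝ, s < r ∧ r ≤ d ∧ 0 < c ∧
    (∀ i : Fin d, s ≤ (i : ℕ) → (i : ℕ) < r → lam i ≤ c) ∧
    (∀ hrd : r < d, c ≤ lam ⟨r, hrd⟩) ∧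
    ((r : ℝ) - (s : ℝ)) * c =
      (∑ i : Fin d, if s ≤ (i : ℕ) ∧ (i : ℕ) < r then lam i else 0) +
        (∑ i : Fin k, if s ≤ (i : ℕ) then a i else 0) ∧
    MajorizedByPad (fun i : Fin (k - s) => a ⟨s + (i : ℕ), by have := i.isLt; omega⟩)
      (fun i : Fin (d - s) =>
        if s + (i : ℕ) < r then c - lam ⟨s + (i : ℕ), by have := i.isLt; omega⟩ else 0)

lemma aux_sortDesc_of_antitone {m : ℕ} (x : Fin m → ℝ) (hx : Antitone x) : sortDesc x = x := by
  have h : Monotone (x ∘ (Fin.revPerm : Equiv.Perm (Fin m))) := by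
    intro i j hij
    exact hx (by simpa using hij)
  have h2 := (Tuple.comp_sort_eq_comp_iff_monotone (f := x) (σ := Fin.revPerm)).2 h
  funext i
  have := congrFun h2 i.rev
  simp [sortDesc] at this ⊢
  exact this.symm

lemma aux_sortDesc_antitone {m : ℕ} (x : Fin m → ℝ) : Antitone (sortDesc x) := by
  intro i j hij
  exact Tuple.monotone_sort x (Fin.rev_le_rev.2 hij)

lemma aux_pad_antitone {k : ℕ} (x : Fin k → ℝ) (hx : Antitone x) (h0 : ∀ i, 0 ≤ x i) (m : ℕ) :
    Antitone (pad x m) := by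
  intro i j hij
  unfold pad
  have : (i : ℕ) ≤ j := hij
  split_ifs with h1 h2
  · exact hx (by simpa using this)
  · omega
  · exact h0 _
  · exact le_rfl

lemma aux_pad_nonneg {k : ℕ} (x : Fin k → ℝ) (h0 : ∀ i, 0 ≤ x i) (m : ℕ) (i : Fin m) :
    0 ≤ pad x m i := by
  unfold pad
  split_ifs
  · exact h0 _
  · exact le_rfl

lemma aux_sum_ext {M : Type*} [AddCommMonoid M] {k N : ℕ} (hkN : k ≤ N) (f : Fin N → M)
    (h0 : ∀ i : Fin N, k ≤ (i : ℕ) → f i = 0) :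
    ∑ i, f i = ∑ i : Fin k, f (Fin.castLE hkN i) := by
  symm
  apply Finset.sum_of_injOn (Fin.castLE hkN)
  · exact (Fin.castLE_injective hkN).injOn
  · intro i _; simp
  · intro i _ hi
    apply h0
    by_contra hlt
    exact hi ⟨⟨i, by omega⟩, by simp, by ext; simp⟩
  · intros; rfl

lemma aux_pad_castLE {k N : ℕ} (hkN : k ≤ N) (x : Fin k → ℝ) (i : Fin k) :
    pad x N (Fin.castLE hkN i) = x i := by
  simp [pad]

lemma aux_pad_big {k N : ℕ} (x : Fin k → ℝ) (i : Fin N) (h : k ≤ (i : ℕ)) :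
    pad x N i = 0 := by
  simp [pad, h]

lemma aux_weight {N : ℕ} (L w : Fin N → ℝ) (hL : Antitone L) (hL0 : ∀ i, 0 ≤ L i)
    (hw0 : ∀ i, 0 ≤ w i) (hw1 : ∀ i, w i ≤ 1) (j : Fin N) (hs : ∑ i, w i ≤ (j : ℕ) + 1) :
    ∑ i, w i * L i ≤ ∑ i ∈ Finset.Iic j, L i := by
  have e : ∑ i ∈ Finset.Iic j, L i = ∑ i, (if i ≤ j then L i else 0) := by
    rw [← Finset.sum_filter]; congr 1; ext; simp
  have e2 : ∑ i : Fin N, (if i ≤ j then (1:ℝ) else 0) = (j : ℕ) + 1 := by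
    rw [← Finset.sum_filter]
    have : Finset.univ.filter (fun i => i ≤ j) = Finset.Iic j := by ext; simp
    rw [this]; simp
  have key : ∑ i, (w i * L i - (if i ≤ j then L i else 0)) ≤
      ∑ i, (L j * (w i - (if i ≤ j then (1:ℝ) else 0))) := by
    apply Finset.sum_le_sum
    intro i _
    split_ifs with h
    · nlinarith [hL h, hw1 i]
    · nlinarith [hL (le_of_not_ge h), hw0 i]
  rw [Finset.sum_sub_distrib, ← Finset.mul_sum, Finset.sum_sub_distrib, e2] at key
  rw [e]
  nlinarith [hL0 j]

lemma aux_step {N : ℕ} (P : (Fin N → ℝ) → Prop)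
    (hP : ∀ x i j t, i ≠ j → P x → 0 ≤ t → t ≤ x i - x j →
      P (Function.update (Function.update x i (x i - t)) j (x j + t)))
    (y : Fin N → ℝ) (hy : Antitone y) : ∀ (n : ℕ) (x : Fin N → ℝ),
    (Finset.univ.filter (fun i => x i ≠ y i)).card = n → P x →
    (∀ j, ∑ i ∈ Finset.Iic j, y i ≤ ∑ i ∈ Finset.Iic j, x i) → ∑ i, y i = ∑ i, x i → P y := by
  intro n
  induction n using Nat.strong_induction_on with
  | _ n ih =>
  intro x hn hx hpre htot
  by_cases hxy : x = y
  · exact hxy ▸ hx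
  have hex : ∃ j, x j < y j := by
    by_contra! hcon
    apply hxy
    have := (Finset.sum_eq_sum_iff_of_le (s := Finset.univ) (fun i _ => hcon i)).1 htot
    funext i; exact (this i (by simp)).symm
  obtain ⟨j, hj, hjmin⟩ : ∃ j, x j < y j ∧ ∀ i < j, y i ≤ x i := by
    have hne : (Finset.univ.filter (fun j => x j < y j)).Nonempty := by
      obtain ⟨j, hj⟩ := hex; exact ⟨j, by simpa using hj⟩
    refine ⟨_, by simpa using Finset.min'_mem _ hne, ?_⟩
    intro i hi
    by_contra! hc
    exact absurd (Finset.min'_le _ i (by simpa using hc)) (not_le.2 hi)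
  obtain ⟨i, hij, hi⟩ : ∃ i < j, y i < x i := by
    by_contra! hcon
    have := hpre j
    refine absurd this (not_le.2 ?_)
    apply Finset.sum_lt_sum
    · intro i hi
      rcases (Finset.mem_Iic.1 hi).lt_or_eq with h | h
      · exact hcon i h
      · exact h ▸ hj.le
    · exact ⟨j, by simp, hj⟩
  set t := min (x i - y i) (y j - x j) with ht
  have ht0 : 0 < t := lt_min (by linarith) (by linarith)
  have ht1 : t ≤ x i - y i := min_le_left _ _
  have ht2 : t ≤ y j - x j := min_le_right _ _
  have hyij := hy hij.le
  set x' := Function.update (Function.update x i (x i - t)) j (x j + t) with hx'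
  have hne : i ≠ j := hij.ne
  have hPx' : P x' := hP x i j t hne hx ht0.le (by linarith)
  have hform : ∀ l, x' l = x l - (if l = i then t else 0) + (if l = j then t else 0) := by
    intro l
    by_cases h1 : l = j
    · subst h1; simp [hx', hne.symm]
    · by_cases h2 : l = i
      · subst h2; simp [hx', h1]
      · simp [hx', h1, h2]
  refine ih _ ?_ x' rfl hPx' ?_ ?_
  · rw [← hn]
    apply Finset.card_lt_card
    rw [Finset.ssubset_iff_of_subset]
    · rcases min_choice (x i - y i) (y j - x j) with h | h
      · refine ⟨i, by simpa using hi.ne', ?_⟩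
        simp [hform, hne, ht, h]
      · refine ⟨j, by simpa using hj.ne, ?_⟩
        simp [hform, hne.symm, ht, h]
    · intro l
      simp only [Finset.mem_filter, Finset.mem_univ, true_and, hform]
      by_cases h1 : l = j
      · subst h1; intro _; exact hj.ne
      · by_cases h2 : l = i
        · subst h2; intro _; exact hi.ne'
        · simp [h1, h2]
  · intro m
    simp only [hform, Finset.sum_add_distrib, Finset.sum_sub_distrib, Finset.sum_ite_eq',
      Finset.mem_Iic]
    by_cases him : i ≤ m
    · by_cases hjm : j ≤ m
      · simp [him, hjm, hpre m]
      · simp only [him, hjm, if_true, if_false, add_zero]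
        have : ∑ l ∈ Finset.Iic m, (if l = i then t else 0) ≤
            ∑ l ∈ Finset.Iic m, (x l - y l) := by
          apply Finset.sum_le_sum
          intro l hl
          have hlj : l < j := lt_of_le_of_lt (Finset.mem_Iic.1 hl) (not_le.1 hjm)
          split_ifs with h
          · rw [h]; exact ht1
          · linarith [hjmin l hlj]
        rw [Finset.sum_sub_distrib] at this
        simp [him] at this
        linarith
    · have hjm : ¬ j ≤ m := fun h => him (hij.le.trans h)
      simp [him, hjm, hpre m]
  · simp [hform, Finset.sum_add_distrib, Finset.sum_sub_distrib, htot]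

/-- rotation -/
lemma aux_rot {d N : ℕ} (B : Matrix (Fin d) (Fin d) ℂ) (x : Fin N → ℝ) (i j : Fin N) (t : ℝ)
    (hij : i ≠ j) (hx : ∃ G : Fin N → Fin d → ℂ, frameOp G = B ∧ ∀ i, normSqVec (G i) = x i)
    (ht0 : 0 ≤ t) (ht : t ≤ x i - x j) :
    ∃ G : Fin N → Fin d → ℂ, frameOp G = B ∧ ∀ l, normSqVec (G l) =
      Function.update (Function.update x i (x i - t)) j (x j + t) l := by
  obtain ⟨G, hG, hn⟩ := hx
  let f : ℝ → ℝ := fun θ => normSqVec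
    (fun l => (Real.cos θ : ℂ) * G i l + (Real.sin θ : ℂ) * G j l)
  have hf : Continuous f := by
    unfold f normSqVec
    refine continuous_finsetSum _ fun l _ => Complex.continuous_normSq.comp ?_
    fun_prop
  have h0 : f 0 = x i := by simp [f, hn]
  have h1 : f (Real.pi / 2) = x j := by
    have : f (Real.pi / 2) = normSqVec (G j) := by simp [f, -Complex.ofReal_cos, -Complex.ofReal_sin]
    rw [this, hn]
  obtain ⟨θ, -, hθ⟩ := intermediate_value_Icc' (by positivity : (0:ℝ) ≤ Real.pi / 2) hf.continuousOn
    (show x i - t ∈ Set.Icc (f (Real.pi/2)) (f 0) by rw [h0, h1]; constructor <;> linarith)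
  set c := Real.cos θ
  set s := Real.sin θ
  have hcs : c ^ 2 + s ^ 2 = 1 := Real.cos_sq_add_sin_sq θ
  have hcsC : (c : ℂ) ^ 2 + (s : ℂ) ^ 2 = 1 := by exact_mod_cast hcs
  let u : Fin d → ℂ := fun l => (c : ℂ) * G i l + (s : ℂ) * G j l
  let v : Fin d → ℂ := fun l => -(s : ℂ) * G i l + (c : ℂ) * G j l
  have hu : normSqVec u = x i - t := hθ
  have huv : normSqVec u + normSqVec v = x i + x j := by
    rw [← hn i, ← hn j]
    unfold normSqVec
    rw [← Finset.sum_add_distrib, ← Finset.sum_add_distrib]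
    refine Finset.sum_congr rfl fun l _ => ?_
    simp only [u, v, Complex.normSq_apply, Complex.add_re, Complex.add_im, Complex.mul_re,
      Complex.mul_im, Complex.ofReal_re, Complex.ofReal_im, Complex.neg_re, Complex.neg_im]
    linear_combination ((G i l).re^2 + (G i l).im^2 + (G j l).re^2 + (G j l).im^2) * hcs
  refine ⟨Function.update (Function.update G i u) j v, ?_, ?_⟩
  · rw [← hG]
    unfold frameOp
    have key : ∀ H : Fin N → Fin d → ℂ, ∑ l, Matrix.vecMulVec (H l) (star (H l)) =
        Matrix.vecMulVec (H i) (star (H i)) + (Matrix.vecMulVec (H j) (star (H j)) +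
          ∑ l ∈ (Finset.univ.erase i).erase j, Matrix.vecMulVec (H l) (star (H l))) := by
      intro H
      rw [Finset.add_sum_erase _ (fun l => Matrix.vecMulVec (H l) (star (H l)))
          (by simp [hij.symm]),
        Finset.add_sum_erase _ (fun l => Matrix.vecMulVec (H l) (star (H l))) (by simp)]
    rw [key, key G]
    have hrest : ∑ l ∈ (Finset.univ.erase i).erase j,
        Matrix.vecMulVec (Function.update (Function.update G i u) j v l)
          (star (Function.update (Function.update G i u) j v l)) =
        ∑ l ∈ (Finset.univ.erase i).erase j, Matrix.vecMulVec (G l) (star (G l)) := by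
      refine Finset.sum_congr rfl fun l hl => ?_
      simp only [Finset.mem_erase] at hl
      simp [hl.1, hl.2.1]
    rw [hrest, ← add_assoc, ← add_assoc]
    congr 1
    simp only [Function.update_self, Function.update_of_ne hij]
    ext p q
    simp only [Matrix.add_apply, Matrix.vecMulVec_apply, Pi.star_apply, u, v, star_add, star_mul',
      star_neg, Complex.star_def, Complex.conj_ofReal]
    linear_combination (G i p * (starRingEnd ℂ) (G i q) + G j p * (starRingEnd ℂ) (G j q)) * hcsC
  · intro l
    by_cases hl1 : l = j
    · subst hl1; simp only [Function.update_self]; linarith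
    · by_cases hl2 : l = i
      · rw [hl2]; simp only [Function.update_of_ne hij, Function.update_self]; exact hu
      · simp [hl1, hl2, hn]

lemma aux_normSqVec_zero {d : ℕ} (g : Fin d → ℂ) (h : normSqVec g = 0) : g = 0 := by
  unfold normSqVec at h
  rw [Finset.sum_eq_zero_iff_of_nonneg (fun i _ => Complex.normSq_nonneg _)] at h
  funext i
  exact Complex.normSq_eq_zero.1 (h i (by simp))

lemma aux_normSqVec_eq {d : ℕ} (g : Fin d → ℂ) : normSqVec g = ‖(WithLp.toLp 2 g : EuclideanSpace ℂ (Fin d))‖ ^ 2 := by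
  rw [EuclideanSpace.norm_sq_eq]
  simp [normSqVec, Complex.normSq_eq_norm_sq]

lemma aux_frameOp_psd {d n : ℕ} (F : Fin n → Fin d → ℂ) : (frameOp F).PosSemidef := by
  unfold frameOp
  exact Matrix.posSemidef_sum _ fun l _ => Matrix.posSemidef_vecMulVec_self_star _

lemma aux_majorizedPad_iff {k d : ℕ} (a : Fin k → ℝ) (ha : Antitone a) (ha0 : ∀ i, 0 ≤ a i)
    (b : Fin d → ℝ) (hb : Antitone b) (hb0 : ∀ i, 0 ≤ b i) :
    MajorizedByPad a b ↔ (∀ j : Fin (max k d), ∑ i ∈ Finset.Iic j, pad a (max k d) i ≤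
      ∑ i ∈ Finset.Iic j, pad b (max k d) i) ∧
      ∑ i, pad a (max k d) i = ∑ i, pad b (max k d) i := by
  unfold MajorizedByPad MajorizedBy
  rw [aux_sortDesc_of_antitone _ (aux_pad_antitone a ha ha0 _),
    aux_sortDesc_of_antitone _ (aux_pad_antitone b hb hb0 _)]

/-- Sorted spectral data. -/
lemma aux_spec {d : ℕ} (B : Matrix (Fin d) (Fin d) ℂ) (hB : B.PosSemidef) :
    ∃ U : OrthonormalBasis (Fin d) ℂ (EuclideanSpace ℂ (Fin d)),
      Antitone (eigsDesc B) ∧ (∀ i, 0 ≤ eigsDesc B i) ∧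
      ∀ i, B.mulVec (U i).ofLp = ((eigsDesc B i : ℝ) : ℂ) • (U i).ofLp := by
  have h := hB.isHermitian
  let σ : Equiv.Perm (Fin d) := Fin.revPerm.trans (Tuple.sort h.eigenvalues)
  have e : eigsDesc B = h.eigenvalues ∘ σ := by
    funext i
    simp [eigsDesc, h, sortDesc, σ]
  refine ⟨h.eigenvectorBasis.reindex σ.symm, ?_, ?_, ?_⟩
  · simp only [eigsDesc, h, dif_pos]; exact aux_sortDesc_antitone _
  · intro i; rw [e]; exact hB.eigenvalues_nonneg _
  · intro i
    rw [e]
    have := h.mulVec_eigenvectorBasis (σ i)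
    simpa using this

lemma aux_resolution {d : ℕ} (U : OrthonormalBasis (Fin d) ℂ (EuclideanSpace ℂ (Fin d))) :
    ∑ m, Matrix.vecMulVec (U m).ofLp (star (U m).ofLp) = 1 := by
  ext p q
  have := U.sum_inner_mul_inner (EuclideanSpace.single p 1) (EuclideanSpace.single q 1)
  simp only [EuclideanSpace.inner_single_left, EuclideanSpace.inner_single_right] at this
  simp only [Matrix.sum_apply, Matrix.vecMulVec_apply, Pi.star_apply, Matrix.one_apply]
  simpa [Pi.single_apply, eq_comm (a := q) (b := p)] using this

lemma aux_init {d N : ℕ} (hd : d ≤ N) (B : Matrix (Fin d) (Fin d) ℂ) (hB : B.PosSemidef) :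
    ∃ G : Fin N → Fin d → ℂ, frameOp G = B ∧ ∀ i, normSqVec (G i) = pad (eigsDesc B) N i := by
  obtain ⟨U, -, h0, hU⟩ := aux_spec B hB
  refine ⟨fun i => if h : (i : ℕ) < d then
    ((Real.sqrt (eigsDesc B ⟨i, h⟩) : ℝ) : ℂ) • (U ⟨i, h⟩).ofLp else 0, ?_, ?_⟩
  · unfold frameOp
    rw [aux_sum_ext hd]
    · have hBs : ∑ m, B * Matrix.vecMulVec (U m).ofLp (star (U m).ofLp) = B := by
        rw [← Finset.mul_sum, aux_resolution, mul_one]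
      refine Eq.trans ?_ hBs
      refine Finset.sum_congr rfl fun m _ => ?_
      rw [Matrix.mul_vecMulVec, hU]
      simp only [Fin.val_castLE, Fin.is_lt, dite_true, Fin.eta]
      ext p q
      have hs : ((Real.sqrt (eigsDesc B m) : ℝ) : ℂ) * ((Real.sqrt (eigsDesc B m) : ℝ) : ℂ) =
          ((eigsDesc B m : ℝ) : ℂ) := by
        exact_mod_cast Real.mul_self_sqrt (h0 m)
      simp only [Matrix.vecMulVec_apply, Pi.smul_apply, Pi.star_apply, smul_eq_mul, star_mul',
        Complex.star_def, Complex.conj_ofReal, ← hs]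
      ring
    · intro i hi
      simp [not_lt.2 hi]
  · intro i
    unfold pad
    beta_reduce
    split_ifs with h
    · rw [aux_normSqVec_eq, WithLp.toLp_smul, norm_smul, mul_pow]
      simp [Real.sq_sqrt (h0 _)]
    · simp [normSqVec]

lemma aux_D {d k : ℕ} (G : Fin k → Fin d → ℂ) :
    ∃ D : Fin d → Fin k → ℝ, (∀ m i, 0 ≤ D m i) ∧ (∀ m, ∑ i, D m i ≤ 1) ∧
      (∀ i, ∑ m, D m i ≤ 1) ∧ (∀ i, normSqVec (G i) = ∑ m, D m i * eigsDesc (frameOp G) m) ∧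
      (∀ m, ∑ i, D m i * eigsDesc (frameOp G) m = eigsDesc (frameOp G) m) := by
  obtain ⟨U, -, h0, hU⟩ := aux_spec (frameOp G) (aux_frameOp_psd G)
  set L := eigsDesc (frameOp G) with hL
  let c : Fin d → Fin k → ℂ := fun m i => inner ℂ (U m) (WithLp.toLp 2 (G i))
  have hc : ∀ m m', ∑ i, c m i * star (c m' i) = if m = m' then (L m' : ℂ) else 0 := by
    intro m m'
    have h1 : ((frameOp G).mulVec (U m').ofLp) ⬝ᵥ star (U m).ofLp = ∑ i, c m i * star (c m' i) := by
      unfold frameOp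
      rw [Matrix.sum_mulVec, sum_dotProduct]
      refine Finset.sum_congr rfl fun i _ => ?_
      rw [Matrix.vecMulVec_mulVec]
      simp only [c, EuclideanSpace.inner_eq_star_dotProduct]
      rw [← Matrix.star_dotProduct_star (star (U m').ofLp) (G i), star_star]
      simp [dotProduct_comm, mul_comm]
    rw [← h1, hU, smul_dotProduct, ← EuclideanSpace.inner_eq_star_dotProduct,
      orthonormal_iff_ite.1 U.orthonormal]
    simp
  have hcn : ∀ m, ∑ i, ‖c m i‖ ^ 2 = L m := by
    intro m
    have := hc m m
    simp only [Complex.star_def, Complex.mul_conj, if_true, Complex.normSq_eq_norm_sq] at this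
    exact_mod_cast this
  have hDL : ∀ m i, ‖c m i‖ ^ 2 / L m * L m = ‖c m i‖ ^ 2 := by
    intro m i
    by_cases h : L m = 0
    · have := hcn m
      rw [h, Finset.sum_eq_zero_iff_of_nonneg (fun _ _ => by positivity)] at this
      rw [this i (by simp)]; simp
    · field_simp
  refine ⟨fun m i => ‖c m i‖ ^ 2 / L m, ?_, ?_, ?_, ?_, ?_⟩
  · intro m i
    exact div_nonneg (by positivity) (h0 m)
  · intro m
    rw [← Finset.sum_div, hcn]
    exact div_self_le_one _
  · intro i
    let r : {m // 0 < L m} → EuclideanSpace ℂ (Fin k) := fun m =>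
      WithLp.toLp 2 fun i => ((Real.sqrt (L m))⁻¹ : ℝ) * c m i
    have hr : Orthonormal ℂ r := by
      rw [orthonormal_iff_ite]
      intro m m'
      have e : inner ℂ (r m) (r m') = (((Real.sqrt (L m))⁻¹ : ℝ) : ℂ) *
          (((Real.sqrt (L m'))⁻¹ : ℝ) : ℂ) * ∑ i, c m' i * star (c m i) := by
        rw [EuclideanSpace.inner_eq_star_dotProduct, Finset.mul_sum]
        unfold dotProduct
        refine Finset.sum_congr rfl fun i _ => ?_
        simp only [r, Pi.star_apply, star_mul', Complex.star_def, Complex.conj_ofReal]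
        ring
      rw [e, hc]
      by_cases h : m = m'
      · subst h
        simp only [if_true]
        have hp := Real.sqrt_pos.2 m.2
        have : (Real.sqrt (L m))⁻¹ * (Real.sqrt (L m))⁻¹ * L m = 1 := by
          nth_rewrite 3 [← Real.mul_self_sqrt m.2.le]
          field_simp
        exact_mod_cast this
      · have : ¬ ((m' : Fin d) = m) := fun h' => h (Subtype.ext h'.symm)
        simp [h, this]
    have hb := hr.sum_inner_products_le (EuclideanSpace.single i (1:ℂ)) (s := Finset.univ)
    simp only [EuclideanSpace.inner_single_right, r, PiLp.norm_single, norm_one, one_pow,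
      one_mul, RCLike.norm_conj, norm_mul] at hb
    refine le_trans (le_of_eq ?_) hb
    have h1 : ∑ m, ‖c m i‖ ^ 2 / L m = ∑ m ∈ Finset.univ.filter (fun m => 0 < L m),
        ‖c m i‖ ^ 2 / L m := by
      symm
      apply Finset.sum_subset (Finset.filter_subset _ _)
      intro m _ hm
      have : L m = 0 := le_antisymm (by simpa using hm) (h0 m)
      simp [this]
    rw [h1, Finset.sum_subtype (p := fun m => 0 < L m) _ (by simp)]
    refine Finset.sum_congr rfl fun m _ => ?_
    have := Real.sq_sqrt m.2.le
    rw [Complex.norm_real, mul_pow, Real.norm_eq_abs, sq_abs, inv_pow, this]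
    field_simp
  · intro i
    simp only [hDL]
    rw [aux_normSqVec_eq, ← U.sum_sq_norm_inner_right]
  · intro m
    simp only [hDL]
    exact hcn m


lemma aux_forward {d k : ℕ} (G : Fin k → Fin d → ℂ) (a : Fin k → ℝ) (ha : Antitone a)
    (ha0 : ∀ i, 0 ≤ a i) (hG : ∀ i, normSqVec (G i) = a i) :
    MajorizedByPad a (eigsDesc (frameOp G)) := by
  obtain ⟨U, hanti, h0, -⟩ := aux_spec (frameOp G) (aux_frameOp_psd G)
  obtain ⟨D, hD0, hD1, hD2, hDa, hDL⟩ := aux_D G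
  rw [aux_majorizedPad_iff a ha ha0 _ hanti h0]
  set L := eigsDesc (frameOp G)
  have hkN : k ≤ max k d := le_max_left _ _
  have hdN : d ≤ max k d := le_max_right _ _
  constructor
  · intro j
    let w : Fin d → ℝ := fun m => ∑ i : Fin k, if (i : ℕ) ≤ j then D m i else 0
    have hw0 : ∀ m, 0 ≤ w m := fun m => Finset.sum_nonneg fun i _ => by
      split_ifs
      · exact hD0 m i
      · exact le_rfl
    have hw1 : ∀ m, w m ≤ 1 := fun m => le_trans (Finset.sum_le_sum fun i _ => by
      split_ifs
      · exact le_rfl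
      · exact hD0 m i) (hD1 m)
    have hws : ∑ m, w m ≤ (j : ℕ) + 1 := by
      simp only [w]
      rw [Finset.sum_comm]
      have h1 : ∑ i : Fin k, ∑ m, (if (i : ℕ) ≤ j then D m i else 0) ≤
          ∑ i : Fin k, if (i : ℕ) ≤ j then (1 : ℝ) else 0 := by
        refine Finset.sum_le_sum fun i _ => ?_
        split_ifs
        · exact hD2 i
        · simp
      refine h1.trans ?_
      rw [← Finset.sum_filter, Finset.sum_const, nsmul_eq_mul, mul_one]
      have : (Finset.univ.filter (fun i : Fin k => (i : ℕ) ≤ j)).card ≤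
          (Finset.range ((j : ℕ) + 1)).card := by
        apply Finset.card_le_card_of_injOn (fun i : Fin k => (i : ℕ))
        · intro i hi
          simp at hi ⊢
          omega
        · exact Fin.val_injective.injOn
      rw [Finset.card_range] at this
      exact_mod_cast this
    have key := aux_weight (pad L (max k d)) (pad w (max k d)) (aux_pad_antitone L hanti h0 _)
      (aux_pad_nonneg L h0 _) (aux_pad_nonneg w hw0 _)
      (fun i => by
        unfold pad
        split_ifs
        · exact hw1 _
        · exact zero_le_one) j
      (by
        rw [aux_sum_ext hdN _ (fun i hi => aux_pad_big w i hi)]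
        simpa only [aux_pad_castLE] using hws)
    refine le_trans (le_of_eq ?_) key
    rw [aux_sum_ext hdN _ (fun i hi => by rw [aux_pad_big w i hi, zero_mul])]
    simp only [aux_pad_castLE]
    have e : ∑ i ∈ Finset.Iic j, pad a (max k d) i =
        ∑ i, if i ≤ j then pad a (max k d) i else 0 := by
      rw [← Finset.sum_filter]; congr 1; ext; simp
    rw [e, aux_sum_ext hkN _ (fun i hi => by rw [aux_pad_big a i hi, ite_self])]
    simp only [aux_pad_castLE, w, Finset.sum_mul]
    rw [Finset.sum_comm]
    refine Finset.sum_congr rfl fun i _ => ?_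
    have : (Fin.castLE hkN i ≤ j) ↔ (i : ℕ) ≤ j := by rw [Fin.le_def]; simp
    simp only [this]
    split_ifs
    · rw [← hG, hDa]
    · simp
  · rw [aux_sum_ext hkN _ (fun i hi => aux_pad_big a i hi),
      aux_sum_ext hdN _ (fun i hi => aux_pad_big L i hi)]
    simp only [aux_pad_castLE, ← hG, hDa]
    rw [Finset.sum_comm]
    exact Finset.sum_congr rfl fun m _ => hDL m

lemma aux_backward {d k : ℕ} (B : Matrix (Fin d) (Fin d) ℂ) (hB : B.PosSemidef) (a : Fin k → ℝ)
    (ha : Antitone a) (ha0 : ∀ i, 0 ≤ a i) (h : MajorizedByPad a (eigsDesc B)) :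
    ∃ G : Fin k → Fin d → ℂ, (∀ i, normSqVec (G i) = a i) ∧ frameOp G = B := by
  obtain ⟨U, hanti, h0, -⟩ := aux_spec B hB
  rw [aux_majorizedPad_iff a ha ha0 _ hanti h0] at h
  have hkN : k ≤ max k d := le_max_left _ _
  obtain ⟨G, hG, hn⟩ := aux_step
    (fun x => ∃ G : Fin (max k d) → Fin d → ℂ, frameOp G = B ∧ ∀ i, normSqVec (G i) = x i)
    (fun x i j t hij hx ht0 ht => aux_rot B x i j t hij hx ht0 ht)
    (pad a (max k d)) (aux_pad_antitone a ha ha0 _) _ (pad (eigsDesc B) (max k d)) rfl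
    (aux_init (le_max_right _ _) B hB) h.1 h.2
  refine ⟨fun i => G (Fin.castLE hkN i), fun i => by rw [hn, aux_pad_castLE], ?_⟩
  rw [← hG]
  unfold frameOp
  rw [aux_sum_ext hkN]
  intro i hi
  rw [aux_normSqVec_zero (G i) (by rw [hn, aux_pad_big a i hi])]
  simp

theorem stmt_1 {d n₀ k : ℕ} (F₀ : Fin n₀ → Fin d → ℂ) (a : Fin k → ℝ)
    (ha_pos : ∀ i, 0 < a i) (ha_mono : Antitone a)
    (hk : d - (frameOp F₀).rank ≤ k) :
    {S : Matrix (Fin d) (Fin d) ℂ |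
        ∃ G : Fin k → Fin d → ℂ, (∀ i, normSqVec (G i) = a i) ∧ S = frameOp F₀ + frameOp G} =
      {S : Matrix (Fin d) (Fin d) ℂ | S.PosSemidef ∧ (S - frameOp F₀).PosSemidef ∧
        MajorizedByPad a (eigsDesc (S - frameOp F₀))} := by
  ext S
  simp only [Set.mem_ofPred_eq]
  constructor
  · rintro ⟨G, hG, rfl⟩
    refine ⟨(aux_frameOp_psd F₀).add (aux_frameOp_psd G), ?_, ?_⟩
    · rw [add_sub_cancel_left]; exact aux_frameOp_psd G
    · rw [add_sub_cancel_left]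
      exact aux_forward G a ha_mono (fun i => (ha_pos i).le) hG
  · rintro ⟨-, hB, hm⟩
    obtain ⟨G, hG, hGB⟩ := aux_backward _ hB a ha_mono (fun i => (ha_pos i).le) hm
    exact ⟨G, hG, by rw [hGB]; abel⟩
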